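/- arXiv:2012.13251 — 11 statements merged into one kernel-verified Lean document; each statement's English description precedes it below -/
import Mathlib

section
/- Let (f_k) be a sequence of nonnegative real numbers, (α_k) a sequence of positive real numbers, (η_k) a sequence of positive real numbers with η_k → 0, γ ∈ (0,1), and M ≥ 1 an integer. Suppose that for all k, f_{k+1} ≤ max{f_k, f_{k−1}, …, f_{max(0,k−M+1)}} + η_k − γ α_k² f_k. If inf_k f_k > 0, then liminf_k α_k = 0 (i.e., there is a subsequence of (α_k) converging to 0). -/
/-!
If no subsequence of `α` tends to `0`, then `α` is eventually bounded below by some `a > 0`, so the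
forcing term `γ α_k² f_k` is eventually at least `γ a² ε`, where `ε` is a positive lower bound
of `f`. Once `η_k` is below half of this, each new term lies below one of the previous
`M` terms by at least the fixed amount `δ = γ a² ε / 2`. The maximum over a window of length `M` then drops
by `δ` every `M` steps, which is impossible for a nonnegative sequence
(`false_of_uniform_window_decrease`).
-/

open Filter Topology

/-- A nonnegative sequence cannot eventually drop by a fixed `δ > 0` below the maximum of its last
`M` terms at every step. -/
lemma false_of_uniform_window_decrease (f : ℕ → ℝ) (M K : ℕ) (δ : ℝ) (hδ : 0 < δ)
    (hf : ∀ k, 0 ≤ f k)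
    (h : ∀ k, K ≤ k → ∃ j < M, f (k + 1) ≤ f (k - j) - δ) : False := by
  obtain ⟨B, hB⟩ : ∃ B, ∀ k ≤ K, f k ≤ B :=
    ⟨∑ i ∈ Finset.range (K + 1), f i, fun k hk =>
      Finset.single_le_sum (fun i _ => hf i) (Finset.mem_range.mpr (by omega))⟩
  have hbound : ∀ k, f k ≤ B := by
    intro k
    induction k using Nat.strong_induction_on with
    | _ k ih =>
      by_cases hk : k ≤ K
      · exact hB k hk
      · obtain ⟨m, rfl⟩ : ∃ m, k = m + 1 := ⟨k - 1, by omega⟩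
        obtain ⟨j, -, hj⟩ := h m (by omega)
        linarith [ih (m - j) (by omega)]
  have hdrop : ∀ n k : ℕ, K + 1 + n * M ≤ k → f k ≤ B - n * δ := by
    intro n
    induction n with
    | zero => intro k _; simpa using hbound k
    | succ n ih =>
      intro k hk
      rw [Nat.succ_mul] at hk
      obtain ⟨m, rfl⟩ : ∃ m, k = m + 1 := ⟨k - 1, by omega⟩
      obtain ⟨j, hjM, hj⟩ := h m (by omega)
      have := ih (m - j) (by omega)
      push_cast
      linarith
  obtain ⟨n, hn⟩ := exists_nat_gt (B / δ)
  rw [div_lt_iff₀ hδ] at hn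
  linarith [hdrop n _ le_rfl, hf (K + 1 + n * M)]

/-- If a nonnegative sequence `f` satisfies the nonmonotone decrease
condition with forcing term `γ α_k² f_k` and perturbations `η_k → 0`, and `inf f_k > 0`,
then some subsequence of `α` tends to `0`. -/
theorem secant_accel_stmt0
    (f α η : ℕ → ℝ) (γ : ℝ) (M : ℕ)
    (hf : ∀ k, 0 ≤ f k)
    (hα : ∀ k, 0 < α k)
    (hη : ∀ k, 0 < η k)
    (hη0 : Tendsto η atTop (𝓝 0))
    (hγ0 : 0 < γ) (hγ1 : γ < 1)
    (hM : 1 ≤ M)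
    (hrec : ∀ k, f (k + 1) ≤
      (Finset.range M).sup' (Finset.nonempty_range_iff.mpr (by omega))
        (fun j => f (k - j)) + η k - γ * (α k) ^ 2 * f k)
    (hinf : ∃ ε > 0, ∀ k, ε ≤ f k) :
    ∃ φ : ℕ → ℕ, StrictMono φ ∧ Tendsto (fun j => α (φ j)) atTop (𝓝 0) := by
  obtain ⟨ε, hε, hfε⟩ := hinf
  have hfreq : ∀ a : ℝ, 0 < a → ∃ᶠ k in atTop, α k < a := by
    intro a ha hev
    have hδ : 0 < γ * a ^ 2 * ε / 2 := by positivity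
    obtain ⟨K, hK⟩ := eventually_atTop.mp (hev.and (hη0.eventually_lt_const hδ))
    refine false_of_uniform_window_decrease f M K _ hδ hf fun k hk => ?_
    obtain ⟨hαk, hηk⟩ := hK k hk
    obtain ⟨j, hjM, hj⟩ := Finset.exists_mem_eq_sup' (s := Finset.range M)
      (Finset.nonempty_range_iff.mpr (by omega)) (fun j => f (k - j))
    refine ⟨j, Finset.mem_range.mp hjM, ?_⟩
    have hk' := hrec k
    rw [hj] at hk'
    have hforce : γ * a ^ 2 * ε ≤ γ * α k ^ 2 * f k := by
      have h1 : a ≤ α k := not_lt.mp hαk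
      have h2 := hfε k
      gcongr
    linarith
  obtain ⟨φ, hφ, hlt⟩ := extraction_forall_of_frequently
    (fun n : ℕ => hfreq (1 / ((n : ℝ) + 1)) (by positivity))
  exact ⟨φ, hφ, squeeze_zero (fun n => (hα _).le) (fun n => (hlt n).le)
    tendsto_one_div_add_atTop_nhds_zero_nat⟩
end

section
/- Assume F is continuous and (x^k) is an Algorithm-2.1 sequence with F(x^k) ≠ 0 for all k. Then either there exists an infinite set K₁ ⊆ ℕ such that ‖F(x^k)‖ → 0 along K₁, or there exists an infinite set K₂ ⊆ ℕ such that α_k → 0 along K₂. -/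
/-!
Suppose both alternatives fail. Then, for all large `k`, both `f (x k)` and `α k` are bounded below
by positive constants, so the decrease term `γ α_k² f (x k)` is eventually at least some `2e > 0`
while `η k ≤ e`. Hence `f (x (k + 1)) ≤ max_{j < M} f (x (k - j)) - e` from some index on.
A sequence satisfying such a windowed decrease drops by `e` each time a whole window is
traversed, so it becomes negative (`exists_neg_of_windowed_decrease`), contradicting `f ≥ 0`.
-/

open Filter Topology

/-- A nonnegative sequence with no subsequence tending to zero is eventually bounded away
from zero. -/
lemma eventually_ge_of_no_subseq (a : ℕ → ℝ) (ha : ∀ k, 0 ≤ a k)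
    (h : ¬ ∃ φ : ℕ → ℕ, StrictMono φ ∧ Tendsto (fun j => a (φ j)) atTop (𝓝 0)) :
    ∃ c > 0, ∀ᶠ k in atTop, c ≤ a k := by
  by_contra hc
  apply h
  have hfr : ∀ m : ℕ, ∃ᶠ k in atTop, a k < 1 / ((m : ℝ) + 1) := by
    intro m hm
    exact hc ⟨1 / ((m : ℝ) + 1), by positivity, hm.mono fun k hk => not_lt.mp hk⟩
  obtain ⟨φ, hφ, hlt⟩ := extraction_forall_of_frequently hfr
  exact ⟨φ, hφ, squeeze_zero (fun j => ha _) (fun j => (hlt j).le)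
    tendsto_one_div_add_atTop_nhds_zero_nat⟩

/-- The hypothesis `hu` says `u (k + 1) ≤ max_{j < M} u (k - j) - e` for `k ≥ N`, phrased
through upper bounds of the window. -/
lemma exists_neg_of_windowed_decrease (u : ℕ → ℝ) (M N : ℕ) (e : ℝ) (he : 0 < e)
    (hu : ∀ k ≥ N, ∀ B, (∀ j < M, u (k - j) ≤ B) → u (k + 1) ≤ B - e) :
    ∃ k, u k < 0 := by
  obtain ⟨B, hB⟩ : ∃ B, ∀ k, u k ≤ B := by
    obtain ⟨B, hB⟩ := ((Finset.range (N + 1)).image u).bddAbove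
    refine ⟨B, fun k => ?_⟩
    induction k using Nat.strong_induction_on with
    | _ k ih =>
      by_cases hk : k ≤ N
      · exact hB (by
          simp only [Finset.coe_image, Set.mem_image, Finset.mem_coe, Finset.mem_range]
          exact ⟨k, by omega, rfl⟩)
      · obtain ⟨l, rfl⟩ : ∃ l, k = l + 1 := ⟨k - 1, by omega⟩
        have := hu l (by omega) B fun j _ => ih _ (by omega)
        linarith
  have key : ∀ m : ℕ, ∃ K, ∀ k ≥ K, u k ≤ B - m * e := by
    intro m
    induction m with
    | zero => exact ⟨0, fun k _ => by simpa using hB k⟩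
    | succ m ih =>
      obtain ⟨K, hK⟩ := ih
      -- Past this index the window of length `M` before `k` lies entirely in `[K, ∞)`.
      refine ⟨K + M + N + 1, fun k hk => ?_⟩
      obtain ⟨l, rfl⟩ : ∃ l, k = l + 1 := ⟨k - 1, by omega⟩
      have := hu l (by omega) (B - m * e) fun j _ => hK _ (by omega)
      push_cast
      linarith
  obtain ⟨m, hm⟩ := exists_nat_gt (B / e)
  obtain ⟨K, hK⟩ := key m
  have h1 := hK K le_rfl
  rw [div_lt_iff₀ he] at hm
  exact ⟨K, by linarith⟩

/-- Lemma 3.1, dichotomy part: if `F` is continuous and `(x^k)` is an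
Algorithm-2.1 sequence with `F(x^k) ≠ 0` for all `k`, then either `‖F(x^k)‖ → 0` along
some infinite subsequence, or `α_k → 0` along some infinite subsequence. -/
theorem secant_accel_stmt1 {n : ℕ}
    (F : EuclideanSpace ℝ (Fin n) → EuclideanSpace ℝ (Fin n))
    (hF : Continuous F)
    (γ σmin σmax : ℝ) (M : ℕ) (η : ℕ → ℝ)
    (hγ0 : 0 < γ) (hγ1 : γ < 1)
    (hσmin : 0 < σmin) (hσ : σmin ≤ σmax)
    (hM : 1 ≤ M)
    (hη : ∀ k, 0 < η k) (hη0 : Tendsto η atTop (𝓝 0))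
    (x v d : ℕ → EuclideanSpace ℝ (Fin n)) (σ α : ℕ → ℝ)
    (f : EuclideanSpace ℝ (Fin n) → ℝ)
    (hf : ∀ y, f y = (1 / 2) * ‖F y‖ ^ 2)
    (hv : ∀ k, ‖v k‖ = ‖F (x k)‖)
    (hσk : ∀ k, |σ k| ∈ Set.Icc σmin σmax)
    (hd : ∀ k, d k = σ k • v k ∨ d k = -(σ k • v k))
    (hα : ∀ k, α k ∈ Set.Ioc (0 : ℝ) 1)
    (harmijo : ∀ k, f (x k + α k • d k) ≤
      (Finset.range M).sup' (Finset.nonempty_range_iff.mpr (by omega))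
        (fun j => f (x (k - j))) + η k - γ * (α k) ^ 2 * f (x k))
    (hnext : ∀ k, f (x (k + 1)) ≤ f (x k + α k • d k))
    (hFne : ∀ k, F (x k) ≠ 0) :
    (∃ φ : ℕ → ℕ, StrictMono φ ∧ Tendsto (fun j => ‖F (x (φ j))‖) atTop (𝓝 0)) ∨
    (∃ φ : ℕ → ℕ, StrictMono φ ∧ Tendsto (fun j => α (φ j)) atTop (𝓝 0)) := by
  by_contra hcon
  rw [not_or] at hcon
  obtain ⟨c, hc, hcF⟩ := eventually_ge_of_no_subseq _ (fun k => norm_nonneg (F (x k))) hcon.1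
  obtain ⟨a, ha, haα⟩ := eventually_ge_of_no_subseq α (fun k => (hα k).1.le) hcon.2
  -- Twice `e` is the eventual lower bound `γ a² (c² / 2)` of the decrease term.
  set e : ℝ := γ * a ^ 2 * ((1 / 2) * c ^ 2) / 2 with he_def
  have he : 0 < e := by positivity
  obtain ⟨N, hN⟩ := eventually_atTop.mp
    ((hcF.and haα).and (hη0.eventually (gt_mem_nhds he)))
  obtain ⟨k, hk⟩ := exists_neg_of_windowed_decrease (fun k => f (x k)) M N e he (by
    intro k hk B hB
    obtain ⟨⟨h1, h2⟩, h3⟩ := hN k hk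
    have h4 := hnext k
    have h5 := harmijo k
    have h6 := Finset.sup'_le (Finset.nonempty_range_iff.mpr (by omega))
      (fun j => f (x (k - j))) (fun j hj => hB j (Finset.mem_range.mp hj))
    have h7 : γ * a ^ 2 * ((1 / 2) * c ^ 2) ≤ γ * α k ^ 2 * f (x k) := by
      rw [hf]
      gcongr
    linarith)
  have := hf (x k)
  have : 0 ≤ f (x k) := by rw [this]; positivity
  exact absurd hk (not_lt.mpr this)
end

section
/- Assume F is continuously differentiable with Jacobian J. Let (x^k), (v^k), (σ_k) be sequences with ‖v^k‖ = ‖F(x^k)‖ and |σ_k| ∈ [σ_min, σ_max] for all k, let d^k = −σ_k v^k, let (η_k) be positive reals, and let f̄_k = max{f(x^k), …, f(x^{max(0,k−M+1)})}. Suppose inf_k ‖F(x^k)‖ > 0 and there is an infinite set K ⊆ ℕ and positive reals α_{k,+}, α_{k,−} (k ∈ K) with α_{k,+} → 0 and α_{k,−} → 0 along K such that, for all k ∈ K, f(x^k + α_{k,+} d^k) > f̄_k + η_k − γ α_{k,+}² f(x^k) and f(x^k − α_{k,−} d^k) > f̄_k + η_k − γ α_{k,−}² f(x^k). If, along K, x^k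 → x_* and v^k → v, then ⟨v, J(x_*)ᵀ F(x_*)⟩ = 0. -/
/-!
The objective `f = ½‖F‖²` is `C¹`, hence strictly differentiable at `xstar`, so the difference
quotients `(f (x + α d) - f x) / α` converge to `f'(xstar) e` whenever `x → xstar`, `d → e` and
`α → 0⁺`. Since the nonmonotone reference value dominates `f (x k)` and `η k > 0`, failure of the
acceptance test bounds such quotients below by `-γ α f (x k) → 0`, so `f'(xstar) e ≥ 0`
(`nonneg_of_failed_descent`). After extracting a subsequence along which `σ → s`, the forward and
backward steps give this for `e = ∓ s • vlim`; as `|s| ≥ σmin > 0`, `f'(xstar) vlim = 0`.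
-/


open Filter Topology
open scoped RealInnerProductSpace

/-- A directional derivative is nonnegative if the function decreases by at most `O(α²)` along
steps `α • d`, where base points and directions converge and `α → 0⁺`. Strict differentiability
accommodates the moving base point. -/
lemma nonneg_of_failed_descent {E : Type*} [NormedAddCommGroup E] [NormedSpace ℝ E]
    {f : E → ℝ} {L : E →L[ℝ] ℝ} {a e : E} (hf : HasStrictFDerivAt f L a)
    {x d : ℕ → E} {α c : ℕ → ℝ} {c₀ : ℝ}
    (hx : Tendsto x atTop (𝓝 a)) (hd : Tendsto d atTop (𝓝 e))
    (hα : ∀ j, 0 < α j) (hα0 : Tendsto α atTop (𝓝 0)) (hc : Tendsto c atTop (𝓝 c₀))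
    (h : ∀ j, -((α j) ^ 2 * c j) ≤ f (x j + α j • d j) - f (x j)) : 0 ≤ L e := by
  have hy : Tendsto (fun j => x j + α j • d j) atTop (𝓝 a) := by
    simpa using hx.add (hα0.smul hd)
  have ho := hf.isLittleO.comp_tendsto (hy.prodMk_nhds hx)
  have hO : (fun j => α j • d j) =O[atTop] α := by
    simpa using (Asymptotics.isBigO_refl α atTop).smul (hd.isBigO_one ℝ)
  have ho' : (fun j => f (x j + α j • d j) - f (x j) - L (α j • d j)) =o[atTop] α := by
    refine Asymptotics.IsLittleO.trans_isBigO ?_ hO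
    simpa [Function.comp_def] using ho
  have hq := ho'.tendsto_div_nhds_zero.add ((L.continuous.tendsto e).comp hd)
  rw [zero_add] at hq
  have hlow : Tendsto (fun j => -(α j * c j)) atTop (𝓝 0) := by
    simpa using (hα0.mul hc).neg
  refine le_of_tendsto_of_tendsto' hlow hq fun j => ?_
  have hj := hα j
  have heq : (f (x j + α j • d j) - f (x j) - L (α j • d j)) / α j + (L ∘ d) j
      = (f (x j + α j • d j) - f (x j)) / α j := by
    simp only [map_smul, smul_eq_mul, Function.comp_apply]
    field_simp
    ring
  rw [heq, le_div_iff₀ hj]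
  linarith [h j]

/-- Lemma 3.2: if `‖F(x^k)‖` is bounded away from zero and along an infinite
subsequence both forward and backward backtracking conditions fail with step sizes tending
to zero, then at the corresponding limit point `x_*` and limit direction `v` one has
`⟨v, J(x_*)ᵀ F(x_*)⟩ = 0`. -/
theorem secant_accel_stmt2 {n : ℕ}
    (F : EuclideanSpace ℝ (Fin n) → EuclideanSpace ℝ (Fin n))
    (hF : ContDiff ℝ 1 F)
    (γ σmin σmax : ℝ) (M : ℕ) (η : ℕ → ℝ)
    (hγ0 : 0 < γ) (hγ1 : γ < 1)
    (hσmin : 0 < σmin) (hσ : σmin ≤ σmax)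
    (hM : 1 ≤ M)
    (hη : ∀ k, 0 < η k)
    (x v d : ℕ → EuclideanSpace ℝ (Fin n)) (σ : ℕ → ℝ)
    (f : EuclideanSpace ℝ (Fin n) → ℝ)
    (hf : ∀ y, f y = (1 / 2) * ‖F y‖ ^ 2)
    (hv : ∀ k, ‖v k‖ = ‖F (x k)‖)
    (hσk : ∀ k, |σ k| ∈ Set.Icc σmin σmax)
    (hd : ∀ k, d k = -(σ k • v k))
    (hbdd : ∃ c > 0, ∀ k, c ≤ ‖F (x k)‖)
    (φ : ℕ → ℕ) (hφ : StrictMono φ)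
    (αp αm : ℕ → ℝ)
    (hαp : ∀ j, 0 < αp j) (hαm : ∀ j, 0 < αm j)
    (hαp0 : Tendsto αp atTop (𝓝 0)) (hαm0 : Tendsto αm atTop (𝓝 0))
    (hviolp : ∀ j, f (x (φ j) + αp j • d (φ j)) >
      (Finset.range M).sup' (Finset.nonempty_range_iff.mpr (by omega))
        (fun i => f (x (φ j - i))) + η (φ j) - γ * (αp j) ^ 2 * f (x (φ j)))
    (hviolm : ∀ j, f (x (φ j) - αm j • d (φ j)) >
      (Finset.range M).sup' (Finset.nonempty_range_iff.mpr (by omega))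
        (fun i => f (x (φ j - i))) + η (φ j) - γ * (αm j) ^ 2 * f (x (φ j)))
    (xstar vlim : EuclideanSpace ℝ (Fin n))
    (hx : Tendsto (fun j => x (φ j)) atTop (𝓝 xstar))
    (hvlim : Tendsto (fun j => v (φ j)) atTop (𝓝 vlim)) :
    ⟪vlim, ContinuousLinearMap.adjoint (fderiv ℝ F xstar) (F xstar)⟫ = 0 := by
  obtain rfl : f = fun y => (1 / 2) * ‖F y‖ ^ 2 := funext hf
  have hFs : HasStrictFDerivAt F (fderiv ℝ F xstar) xstar :=
    hF.contDiffAt.hasStrictFDerivAt (by norm_num)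
  have hfs := ((hasStrictFDerivAt_norm_sq (F xstar)).comp xstar hFs).const_mul (1 / 2 : ℝ)
  obtain ⟨s, hs, ψ, hψ, hσlim⟩ :=
    ((isCompact_Icc (a := -σmax) (b := σmax)).tendsto_subseq
      (x := fun j => σ (φ j)) (fun j => abs_le.mp (hσk (φ j)).2))
  have hs0 : s ≠ 0 := by
    have : σmin ≤ |s| := ge_of_tendsto' hσlim.abs fun j => (hσk _).1
    exact abs_pos.mp (hσmin.trans_le this)
  have hψt := hψ.tendsto_atTop
  have hdlim : Tendsto (fun j => d (φ (ψ j))) atTop (𝓝 (-(s • vlim))) := by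
    simp only [hd]
    exact (hσlim.smul (hvlim.comp hψt)).neg
  have hc : Tendsto (fun j => γ * ((1 / 2) * ‖F (x (φ (ψ j)))‖ ^ 2)) atTop
      (𝓝 (γ * ((1 / 2) * ‖F xstar‖ ^ 2))) :=
    ((((hF.continuous.tendsto xstar).comp (hx.comp hψt)).norm.pow 2).const_mul _).const_mul _
  -- the index `i = 0` of the reference window contributes `f (x k)` itself
  have hsup : ∀ k, (1 / 2) * ‖F (x k)‖ ^ 2 ≤
      (Finset.range M).sup' (Finset.nonempty_range_iff.mpr (by omega))
        (fun i => (1 / 2) * ‖F (x (k - i))‖ ^ 2) := fun k =>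
    Finset.le_sup' (fun i => (1 / 2) * ‖F (x (k - i))‖ ^ 2)
      (Finset.mem_range.mpr (show 0 < M by omega))
  have hp := nonneg_of_failed_descent hfs (hx.comp hψt) hdlim (fun j => hαp (ψ j))
    (hαp0.comp hψt) hc (fun j => by
      have h1 := hviolp (ψ j)
      have h2 := hsup (φ (ψ j))
      have h3 := hη (φ (ψ j))
      simp only [Function.comp_apply]
      linarith)
  have hm := nonneg_of_failed_descent hfs (hx.comp hψt) hdlim.neg (fun j => hαm (ψ j))
    (hαm0.comp hψt) hc (fun j => by
      have h1 := hviolm (ψ j)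
      have h2 := hsup (φ (ψ j))
      have h3 := hη (φ (ψ j))
      simp only [Function.comp_apply, smul_neg, ← sub_eq_add_neg]
      linarith)
  rw [map_neg] at hm
  have h0 := le_antisymm (neg_nonneg.mp hm) hp
  rw [ContinuousLinearMap.adjoint_inner_right, real_inner_comm]
  simpa [hs0, real_inner_smul_right] using h0
end

section
/- Assume F is continuous, Σ_k η_k < ∞, (x^k) is an Algorithm-2.1 sequence, and: (Assumption A) there exists c > 0 such that ‖x^{k+1} − x^k‖ ≤ c ‖F(x^k)‖ for all k; (Assumption B) for every ε > 0 there exists δ > 0 such that for every k, ‖x^{k+1} − x^k‖ ≤ δ implies ‖F(x^{k+1}) − F(x^k)‖ ≤ ε. If there exists an infinite set K₁ ⊆ ℕ with ‖F(x^k)‖ → 0 along K₁, then ‖F(x^k)‖ → 0 as k → ∞ and ‖x^{k+1} − x^k‖ → 0 as k → ∞. -/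
open Filter Topology

/-!
Assumptions A and B together say that a small residual `‖F (x k)‖` forces a small next residual,
uniformly in `k` (`tendsto_residual_shift`). Hence smallness along a subsequence propagates to
windows of `M` consecutive iterates starting at arbitrarily late indices. The line search condition
bounds each `f (x (k + 1))` by the maximum over the last `M` values plus `η k`, so once a whole
window starting at `m` lies below `ε`, all later values stay below `ε` plus the tail
`∑_{i ≥ m} η i` (`le_of_window`), which is small because `η` is summable.
-/

/-- If `a (k + 1)` exceeds some value among the last `M` by at most `η k`, then a bound `ε` on the
window `m, …, m + M - 1` persists afterwards up to the accumulated errors since `m`. -/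
lemma le_of_window {a η : ℕ → ℝ} {M m : ℕ} {ε : ℝ} (hη : ∀ k, 0 ≤ η k)
    (hstep : ∀ k, ∃ j < M, a (k + 1) ≤ a (k - j) + η k)
    (hwin : ∀ i < M, a (m + i) ≤ ε) (k : ℕ) (hk : m ≤ k) :
    a k ≤ ε + (∑ i ∈ Finset.range k, η i - ∑ i ∈ Finset.range m, η i) := by
  have hmono : Monotone fun k => ∑ i ∈ Finset.range k, η i :=
    monotone_nat_of_le_succ fun k => by
      simpa [Finset.sum_range_succ] using hη k
  induction k using Nat.strong_induction_on with
  | _ k ih =>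
    by_cases hkM : k < m + M
    · have h := hwin (k - m) (by omega)
      rw [Nat.add_sub_cancel' hk] at h
      have := hmono hk
      simp only at this
      linarith
    · -- `hstep` forces `0 < M`, hence `0 < k`.
      obtain ⟨j₀, hj₀, -⟩ := hstep 0
      obtain ⟨l, rfl⟩ : ∃ l, k = l + 1 := ⟨k - 1, by omega⟩
      obtain ⟨j, hj, h⟩ := hstep l
      have h1 := ih (l - j) (by omega) (by omega)
      have h2 := hmono (Nat.sub_le l j)
      simp only at h2
      rw [Finset.sum_range_succ]
      linarith

/-- Under Assumptions A and B, residuals vanishing along `φ` also vanish along every fixed shift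
of `φ`. -/
lemma tendsto_residual_shift {E : Type*} [SeminormedAddCommGroup E] {F : E → E} {x : ℕ → E}
    (hA : ∃ c > (0 : ℝ), ∀ k, ‖x (k + 1) - x k‖ ≤ c * ‖F (x k)‖)
    (hB : ∀ ε > (0 : ℝ), ∃ δ > (0 : ℝ), ∀ k,
      ‖x (k + 1) - x k‖ ≤ δ → ‖F (x (k + 1)) - F (x k)‖ ≤ ε)
    {φ : ℕ → ℕ} (hφ : Tendsto (fun j => ‖F (x (φ j))‖) atTop (𝓝 0)) (i : ℕ) :
    Tendsto (fun j => ‖F (x (φ j + i))‖) atTop (𝓝 0) := by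
  obtain ⟨c, hc, hA⟩ := hA
  induction i with
  | zero => simpa using hφ
  | succ i ih =>
    have hdiff : Tendsto (fun j => ‖F (x (φ j + i + 1)) - F (x (φ j + i))‖) atTop (𝓝 0) := by
      rw [Metric.tendsto_nhds]
      intro ε hε
      obtain ⟨δ, hδ, hB⟩ := hB (ε / 2) (by positivity)
      filter_upwards [ih.eventually (gt_mem_nhds (show 0 < δ / c by positivity))] with j hj
      have h1 : c * ‖F (x (φ j + i))‖ ≤ δ := by
        rw [lt_div_iff₀ hc] at hj
        linarith
      have h2 := hB _ ((hA _).trans h1)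
      rw [Real.dist_eq, sub_zero, abs_norm]
      linarith
    refine squeeze_zero (fun _ => norm_nonneg _) (fun j => ?_) (by simpa using hdiff.add ih)
    rw [← add_assoc]
    simpa using norm_add_le (F (x (φ j + i + 1)) - F (x (φ j + i))) (F (x (φ j + i)))

/-- Lemma 3.3: if `F` is continuous, `Σ η_k < ∞`, `(x^k)` is an
Algorithm-2.1 sequence satisfying Assumptions A and B, and `‖F(x^k)‖ → 0` along some
infinite subsequence, then `‖F(x^k)‖ → 0` and `‖x^{k+1} − x^k‖ → 0` for the whole
sequence. -/
theorem secant_accel_stmt6 {n : ℕ}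
    (F : EuclideanSpace ℝ (Fin n) → EuclideanSpace ℝ (Fin n))
    (hF : Continuous F)
    (γ σmin σmax : ℝ) (M : ℕ) (η : ℕ → ℝ)
    (hγ0 : 0 < γ) (hγ1 : γ < 1)
    (hσmin : 0 < σmin) (hσ : σmin ≤ σmax)
    (hM : 1 ≤ M)
    (hη : ∀ k, 0 < η k) (hη0 : Tendsto η atTop (𝓝 0))
    (x v d : ℕ → EuclideanSpace ℝ (Fin n)) (σ α : ℕ → ℝ)
    (f : EuclideanSpace ℝ (Fin n) → ℝ)
    (hf : ∀ y, f y = (1 / 2) * ‖F y‖ ^ 2)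
    (hv : ∀ k, ‖v k‖ = ‖F (x k)‖)
    (hσk : ∀ k, |σ k| ∈ Set.Icc σmin σmax)
    (hd : ∀ k, d k = σ k • v k ∨ d k = -(σ k • v k))
    (hα : ∀ k, α k ∈ Set.Ioc (0 : ℝ) 1)
    (harmijo : ∀ k, f (x k + α k • d k) ≤
      (Finset.range M).sup' (Finset.nonempty_range_iff.mpr (by omega))
        (fun j => f (x (k - j))) + η k - γ * (α k) ^ 2 * f (x k))
    (hnext : ∀ k, f (x (k + 1)) ≤ f (x k + α k • d k))
    (hsum : Summable η)
    (hA : ∃ c > (0 : ℝ), ∀ k, ‖x (k + 1) - x k‖ ≤ c * ‖F (x k)‖)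
    (hB : ∀ ε > (0 : ℝ), ∃ δ > (0 : ℝ), ∀ k,
      ‖x (k + 1) - x k‖ ≤ δ → ‖F (x (k + 1)) - F (x k)‖ ≤ ε)
    (hK1 : ∃ φ : ℕ → ℕ, StrictMono φ ∧ Tendsto (fun j => ‖F (x (φ j))‖) atTop (𝓝 0)) :
    Tendsto (fun k => ‖F (x k)‖) atTop (𝓝 0) ∧
    Tendsto (fun k => ‖x (k + 1) - x k‖) atTop (𝓝 0) := by
  have hshift := fun i φ hφ => tendsto_residual_shift (φ := φ) hA hB hφ i
  obtain ⟨φ, hφ, hφ0⟩ := hK1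
  have hstep : ∀ k, ∃ j < M, f (x (k + 1)) ≤ f (x (k - j)) + η k := by
    intro k
    obtain ⟨j, hj, hj'⟩ := Finset.exists_mem_eq_sup' (s := Finset.range M)
      (Finset.nonempty_range_iff.mpr (by omega)) (fun j => f (x (k - j)))
    refine ⟨j, Finset.mem_range.mp hj, ?_⟩
    have h := (hnext k).trans (harmijo k)
    rw [hj'] at h
    have : 0 ≤ γ * (α k) ^ 2 * f (x k) := by
      rw [hf]
      positivity
    linarith
  have hf0 : ∀ k, 0 ≤ f (x k) := fun k => by
    rw [hf]
    positivity
  have hwin : ∀ i, Tendsto (fun j => f (x (φ j + i))) atTop (𝓝 0) := fun i => by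
    simpa [hf] using ((hshift i φ hφ0).pow 2).const_mul (1 / 2 : ℝ)
  have hlim : Tendsto (fun k => f (x k)) atTop (𝓝 0) := by
    rw [Metric.tendsto_atTop]
    intro ε hε
    have hw : ∀ᶠ j in atTop, ∀ i ∈ Finset.range M, f (x (φ j + i)) < ε / 2 :=
      (Filter.eventually_all_finset _).mpr fun i _ =>
        (hwin i).eventually (gt_mem_nhds (by positivity))
    have ht : ∀ᶠ j in atTop, ∑' i, η i - ε / 2 < ∑ i ∈ Finset.range (φ j), η i :=
      (hsum.hasSum.tendsto_sum_nat.comp hφ.tendsto_atTop).eventually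
        (lt_mem_nhds (by linarith))
    obtain ⟨j, hw, ht⟩ := (hw.and ht).exists
    refine ⟨φ j, fun k hk => ?_⟩
    have h := le_of_window (a := fun k => f (x k)) (fun k => (hη k).le) hstep
      (fun i hi => (hw i (Finset.mem_range.mpr hi)).le) k hk
    have hS := hsum.sum_le_tsum (Finset.range k) fun i _ => (hη i).le
    rw [Real.dist_eq, sub_zero, abs_of_nonneg (hf0 k)]
    linarith
  have hF0 : Tendsto (fun k => ‖F (x k)‖) atTop (𝓝 0) := by
    have h := (hlim.const_mul 2).sqrt
    simp only [mul_zero, Real.sqrt_zero] at h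
    refine h.congr fun k => ?_
    rw [hf, ← mul_assoc, mul_one_div_cancel two_ne_zero, one_mul, Real.sqrt_sq (norm_nonneg _)]
  obtain ⟨c, hc, hA⟩ := hA
  exact ⟨hF0, squeeze_zero (fun _ => norm_nonneg _) hA (by simpa using hF0.const_mul c)⟩
end

section
/- Let (f_k) be a sequence of nonnegative real numbers, (η_k) a sequence of nonnegative real numbers, and M ≥ 1 an integer. Suppose that for all k, f_{k+1} ≤ max{f_k, f_{k−1}, …, f_{max(0,k−M+1)}} + η_k. Then for every k ≥ M−1 and every integer ℓ ≥ 1, max{f_{k+ℓM}, f_{k+ℓM+1}, …, f_{k+(ℓ+1)M−1}} ≤ max{f_k, f_{k+1}, …, f_{k+M−1}} + Σ_{j=k+M−1}^{k+(ℓ+1)M−2} η_j. -/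
/-!
Put `A = max{f_k, …, f_{k+M−1}}`. Strong induction on `n` gives
`f_{k+n} ≤ A + Σ_{k+M−1 ≤ j < k+n} η_j` for every `n`: for `n < M` the term is one of those in `A`,
and for `n ≥ M` the recurrence bounds it by one of the preceding `M` terms, all with index at
least `k`, plus `η_{k+n−1}`. For the indices `n = ℓM + i` with `i < M` the sum is over a subset of
the range in the theorem, and `η` is nonnegative.
-/

open Filter Topology

/-- For a nonnegative sequence satisfying the nonmonotone recurrence
`f_{k+1} ≤ max{f_k, …, f_{max(0,k−M+1)}} + η_k` with nonnegative `η`, for every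
`k ≥ M − 1` and every `ℓ ≥ 1`,
`max{f_{k+ℓM}, …, f_{k+(ℓ+1)M−1}} ≤ max{f_k, …, f_{k+M−1}} + Σ_{j=k+M−1}^{k+(ℓ+1)M−2} η_j`. -/
theorem secant_accel_stmt7
    (f η : ℕ → ℝ) (M : ℕ)
    (hf : ∀ k, 0 ≤ f k)
    (hη : ∀ k, 0 ≤ η k)
    (hM : 1 ≤ M)
    (hrec : ∀ k, f (k + 1) ≤
      (Finset.range M).sup' (Finset.nonempty_range_iff.mpr (by omega))
        (fun j => f (k - j)) + η k) :
    ∀ k, M - 1 ≤ k → ∀ ℓ : ℕ, 1 ≤ ℓ →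
      (Finset.range M).sup' (Finset.nonempty_range_iff.mpr (by omega))
          (fun j => f (k + ℓ * M + j)) ≤
        (Finset.range M).sup' (Finset.nonempty_range_iff.mpr (by omega))
            (fun j => f (k + j)) +
          ∑ j ∈ Finset.Icc (k + M - 1) (k + (ℓ + 1) * M - 2), η j := by
  intro k _ ℓ _
  set A := (Finset.range M).sup' (Finset.nonempty_range_iff.mpr (by omega))
    (fun j => f (k + j)) with hA
  have key : ∀ n, f (k + n) ≤ A + ∑ j ∈ Finset.Ico (k + M - 1) (k + n), η j := by
    intro n
    induction n using Nat.strong_induction_on with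
    | _ n ih =>
      by_cases hn : n < M
      · have h1 : f (k + n) ≤ A :=
          Finset.le_sup' (fun j => f (k + j)) (Finset.mem_range.mpr hn)
        have h2 : 0 ≤ ∑ j ∈ Finset.Ico (k + M - 1) (k + n), η j :=
          Finset.sum_nonneg fun j _ => hη j
        linarith
      · obtain ⟨m, rfl⟩ : ∃ m, n = m + 1 := ⟨n - 1, by omega⟩
        have hmax : (Finset.range M).sup' (Finset.nonempty_range_iff.mpr (by omega))
            (fun j => f (k + m - j)) ≤ A + ∑ j ∈ Finset.Ico (k + M - 1) (k + m), η j := by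
          refine Finset.sup'_le _ _ fun j hj => ?_
          have hj' := Finset.mem_range.mp hj
          have hsub : ∑ i ∈ Finset.Ico (k + M - 1) (k + (m - j)), η i ≤
              ∑ i ∈ Finset.Ico (k + M - 1) (k + m), η i :=
            Finset.sum_le_sum_of_subset_of_nonneg
              (Finset.Ico_subset_Ico_right (by omega)) fun i _ _ => hη i
          have h := ih (m - j) (by omega)
          -- `j ≤ m`, so the truncated subtraction in the index is genuine
          have e : k + m - j = k + (m - j) := by omega
          simp only [e]
          linarith
        have hr := hrec (k + m)
        rw [← add_assoc, Finset.sum_Ico_succ_top (by omega)]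
        linarith
  refine Finset.sup'_le _ _ fun i hi => ?_
  have hi' := Finset.mem_range.mp hi
  have hsub : ∑ j ∈ Finset.Ico (k + M - 1) (k + (ℓ * M + i)), η j ≤
      ∑ j ∈ Finset.Icc (k + M - 1) (k + (ℓ + 1) * M - 2), η j := by
    refine Finset.sum_le_sum_of_subset_of_nonneg (fun j hj => ?_) fun j _ _ => hη j
    rw [Finset.mem_Ico] at hj
    rw [Finset.mem_Icc, add_one_mul]
    omega
  have h := key (ℓ * M + i)
  rw [← add_assoc] at h hsub
  linarith
end

section
/- Let F : ℝⁿ → ℝⁿ and let (x^k) be a sequence in ℝⁿ such that: there exists c > 0 with ‖x^{k+1} − x^k‖ ≤ c ‖F(x^k)‖ for all k, and for every ε > 0 there exists δ > 0 such that for every k, ‖x^{k+1} − x^k‖ ≤ δ implies ‖F(x^{k+1}) − F(x^k)‖ ≤ ε. If K₁ ⊆ ℕ is an infinite set with ‖F(x^k)‖ → 0 along K₁, then for every fixed integer j ≥ 0, ‖F(x^{k+j})‖ → 0 as k → ∞ along K₁. -/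
/-!
Induction on the shift `j`. If `‖F (x (φ i + j))‖ → 0`, the step bound makes
`‖x (φ i + j + 1) - x (φ i + j)‖` tend to zero, and uniform continuity along the sequence then
makes `‖F (x (φ i + j + 1)) - F (x (φ i + j))‖` tend to zero; the triangle inequality concludes.
-/

open Filter Topology

/-- if `‖x^{k+1} − x^k‖ ≤ c ‖F(x^k)‖`, `F` is uniformly continuous along the
sequence, and `‖F(x^k)‖ → 0` along an infinite subsequence (indexed by a strictly
monotone `φ`), then for every fixed shift `j`, `‖F(x^{k+j})‖ → 0` along that
subsequence. -/
theorem secant_accel_stmt8 {n : ℕ}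
    (F : EuclideanSpace ℝ (Fin n) → EuclideanSpace ℝ (Fin n))
    (x : ℕ → EuclideanSpace ℝ (Fin n))
    (hA : ∃ c > (0 : ℝ), ∀ k, ‖x (k + 1) - x k‖ ≤ c * ‖F (x k)‖)
    (hB : ∀ ε > (0 : ℝ), ∃ δ > (0 : ℝ), ∀ k,
      ‖x (k + 1) - x k‖ ≤ δ → ‖F (x (k + 1)) - F (x k)‖ ≤ ε)
    (φ : ℕ → ℕ) (hφ : StrictMono φ)
    (hK1 : Tendsto (fun i => ‖F (x (φ i))‖) atTop (𝓝 0)) :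
    ∀ j : ℕ, Tendsto (fun i => ‖F (x (φ i + j))‖) atTop (𝓝 0) := by
  obtain ⟨c, hc, hstep⟩ := hA
  intro j
  induction j with
  | zero => simpa using hK1
  | succ j ih =>
    rw [Metric.tendsto_atTop] at ih ⊢
    intro ε hε
    obtain ⟨δ, hδ, hF⟩ := hB (ε / 2) (half_pos hε)
    -- `ε / 2` bounds the residual at shift `j`; `δ / c` makes the next step at most `δ`.
    obtain ⟨N, hN⟩ := ih (min (ε / 2) (δ / c)) (lt_min (half_pos hε) (div_pos hδ hc))
    refine ⟨N, fun i hi => ?_⟩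
    have hsmall := hN i hi
    rw [Real.dist_eq, sub_zero, abs_norm, lt_min_iff, lt_div_iff₀ hc] at hsmall
    have hdiff := hF (φ i + j) ((hstep _).trans (by linarith [hsmall.2]))
    have htri := norm_sub_norm_le (F (x (φ i + j + 1))) (F (x (φ i + j)))
    rw [Real.dist_eq, sub_zero, abs_norm, ← add_assoc]
    linarith [hsmall.1]
end

section
/- Let F : ℝⁿ → ℝⁿ, x_* ∈ ℝⁿ, and δ > 0 be such that ‖F(x)‖ > 0 whenever 0 < ‖x − x_*‖ ≤ δ, and such that the infimum of ‖F(x)‖ over each annulus {x : ε ≤ ‖x − x_*‖ ≤ δ} is positive for every ε ∈ (0, δ] (this holds, in particular, when F is continuous). Let (x^k) be a sequence in ℝⁿ with ‖F(x^k)‖ → 0, ‖x^{k+1} − x^k‖ → 0, and such that some subsequence of (x^k) converges to x_*. Then the whole sequence (x^k) converges to x_*. -/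
open Filter Topology

/-! Once `‖F (x k)‖` is below the lower bound of `‖F‖` on the annulus `η ≤ ‖y - xstar‖ ≤ δ`, no iterate
can lie in that annulus; once the steps are shorter than `η ≤ δ / 2`, no iterate in the ball of
radius `η` can jump over it. The subsequence provides a late iterate in that ball, so all later
iterates stay there. -/

/-- if `‖F‖` is positive on the punctured ball around `x_*` of radius `δ`
and bounded below by a positive constant on each annulus `{ε ≤ ‖x − x_*‖ ≤ δ}`, and a
sequence satisfies `‖F(x^k)‖ → 0`, `‖x^{k+1} − x^k‖ → 0`, and has a subsequence
converging to `x_*`, then the whole sequence converges to `x_*`. -/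
theorem secant_accel_stmt10 {n : ℕ}
    (F : EuclideanSpace ℝ (Fin n) → EuclideanSpace ℝ (Fin n))
    (xstar : EuclideanSpace ℝ (Fin n)) (δ : ℝ) (hδ : 0 < δ)
    (hpos : ∀ y, 0 < ‖y - xstar‖ → ‖y - xstar‖ ≤ δ → 0 < ‖F y‖)
    (hinf : ∀ ε : ℝ, 0 < ε → ε ≤ δ →
      ∃ m > (0 : ℝ), ∀ y, ε ≤ ‖y - xstar‖ → ‖y - xstar‖ ≤ δ → m ≤ ‖F y‖)
    (x : ℕ → EuclideanSpace ℝ (Fin n))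
    (hF0 : Tendsto (fun k => ‖F (x k)‖) atTop (𝓝 0))
    (hstep : Tendsto (fun k => ‖x (k + 1) - x k‖) atTop (𝓝 0))
    (hsub : ∃ φ : ℕ → ℕ, StrictMono φ ∧ Tendsto (fun j => x (φ j)) atTop (𝓝 xstar)) :
    Tendsto x atTop (𝓝 xstar) := by
  obtain ⟨φ, hφ, hlim⟩ := hsub
  rw [Metric.tendsto_atTop]
  intro ε hε
  -- With `η ≤ δ / 2`, a step shorter than `η` from the `η`-ball stays in the `δ`-ball.
  obtain ⟨η, hη0, hηε, hηδ⟩ : ∃ η : ℝ, 0 < η ∧ η ≤ ε ∧ η + η ≤ δ :=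
    ⟨min ε (δ / 2), lt_min hε (half_pos hδ), min_le_left _ _, by
      linarith [min_le_right ε (δ / 2)]⟩
  obtain ⟨m, hm, hmF⟩ := hinf η hη0 (by linarith)
  obtain ⟨N, hN⟩ := eventually_atTop.1
    ((hF0.eventually_lt_const hm).and (hstep.eventually_lt_const hη0))
  obtain ⟨J, hJ⟩ := Metric.tendsto_atTop.1 hlim η hη0
  refine ⟨φ (max N J), fun k hk => lt_of_lt_of_le ?_ hηε⟩
  rw [dist_eq_norm]
  induction k, hk using Nat.le_induction with
  | base => simpa [dist_eq_norm] using hJ _ (le_max_right N J)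
  | succ k hk ih =>
    have hNk : N ≤ k := (le_max_left N J).trans ((hφ.id_le _).trans hk)
    by_contra! h
    have htri : ‖x (k + 1) - xstar‖ ≤ ‖x (k + 1) - x k‖ + ‖x k - xstar‖ :=
      norm_sub_le_norm_sub_add_norm_sub _ _ _
    have hle := hmF (x (k + 1)) h (by linarith [(hN k hNk).2])
    linarith [(hN (k + 1) (by omega)).1]
end

section
/- Let F : ℝⁿ → ℝⁿ be differentiable with Jacobian J Lipschitz continuous on an open convex set containing all terms of a sequence (x^k). Define s^k = x^{k+1} − x^k and y^k = F(x^{k+1}) − F(x^k), and suppose for all k ≥ k₀: s^k ≠ 0, (s^{k−1})ᵀ y^{k−1} ≠ 0, and x^{k+1} = x^k − (1/κ_k) F(x^k) where κ_k = (s^{k−1})ᵀ y^{k−1} / ‖s^{k−1}‖². Assume x^k → x_* with J(x_*) invertible, and s^k/‖s^k‖ → s for some s ∈ ℝⁿ. Then: (a) κ_{k+1} → sᵀ J(x_*) s; (b) F(x_*) = 0; and (c) x^k converges Q-superlinearly to x_*, i.e., ‖x^{k+1} − x_*‖ / ‖x^k − x_*‖ → 0. -/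
open Filter Topology
open scoped RealInnerProductSpace

/-! The iteration says `F (x k) = -κ k • s k`. Since `J` is Lipschitz on the convex set `U` and
`x k → xstar`, the secants satisfy `y k = J s k + o(‖s k‖)` with `J = fderiv ℝ F xstar`; here
`xstar` may lie on the boundary of `U`, and the limit of the derivatives along `x` is identified
with `J` because a convex set with interior has unique derivatives at the points of its closure.

Dividing by `‖s k‖ ^ 2` gives `κ (k + 1) → λ = ⟪s, J s⟫`, so `F (x k) = -κ k • s k → 0`, which is
`F xstar = 0`. Moreover `F (x (k + 1)) / ‖s k‖ = (y k - κ k • s k) / ‖s k‖` tends to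
`v = J s - λ s`, which is orthogonal to the unit vector `s`. But `F (x (k + 1))` is also a multiple of
`s (k + 1)`, so `v` is a multiple of `s`; hence `v = 0` and `F (x (k + 1)) = o(‖s k‖)`.
Invertibility of `J` gives `‖x (k + 1) - xstar‖ = O(‖F (x (k + 1))‖) = o(‖s k‖)`, and
`‖s k‖ ≤ ‖x (k + 1) - xstar‖ + ‖x k - xstar‖` turns this into superlinear convergence. -/

/-- A derivative that is Lipschitz on an open convex set obeys the same estimate against the
derivative at a limit point of the set, which need not belong to it. -/
lemma norm_fderiv_sub_le_of_tendsto {E : Type*} [NormedAddCommGroup E] [NormedSpace ℝ E]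
    [CompleteSpace E] {F : E → E} (hF : Differentiable ℝ F)
    {U : Set E} (hUopen : IsOpen U) (hUconv : Convex ℝ U) {L : ℝ} (hL : 0 < L)
    (hLip : ∀ a ∈ U, ∀ b ∈ U, ‖fderiv ℝ F a - fderiv ℝ F b‖ ≤ L * ‖a - b‖)
    {x : ℕ → E} (hxU : ∀ k, x k ∈ U) {p : E} (hxlim : Tendsto x atTop (𝓝 p)) :
    ∀ a ∈ U, ‖fderiv ℝ F a - fderiv ℝ F p‖ ≤ L * ‖a - p‖ := by
  have hcau : CauchySeq (fun k => fderiv ℝ F (x k)) := by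
    rw [Metric.cauchySeq_iff]
    intro ε hε
    obtain ⟨N, hN⟩ := Metric.cauchySeq_iff.1 hxlim.cauchySeq (ε / L) (by positivity)
    refine ⟨N, fun m hm k hk => ?_⟩
    have h1 := hN m hm k hk
    rw [dist_eq_norm] at h1 ⊢
    calc _ ≤ L * ‖x m - x k‖ := hLip _ (hxU m) _ (hxU k)
      _ < L * (ε / L) := by gcongr
      _ = ε := by field_simp
  obtain ⟨A, hA⟩ := cauchySeq_tendsto_of_complete hcau
  have hbound : ∀ a ∈ U, ‖fderiv ℝ F a - A‖ ≤ L * ‖a - p‖ := fun a ha =>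
    le_of_tendsto_of_tendsto' (hA.const_sub _).norm ((hxlim.const_sub a).norm.const_mul L)
      (fun k => hLip a ha _ (hxU k))
  have hp : p ∈ closure U := mem_closure_of_tendsto hxlim (Eventually.of_forall hxU)
  have hlim : Tendsto (fun z => fderiv ℝ F z) (𝓝[U] p) (𝓝 A) := by
    rw [tendsto_iff_norm_sub_tendsto_zero]
    refine squeeze_zero' (Eventually.of_forall fun _ => norm_nonneg _)
      (eventually_nhdsWithin_of_forall hbound) ?_
    have : Tendsto (fun z => L * ‖z - p‖) (𝓝 p) (𝓝 (L * ‖p - p‖)) :=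
      Continuous.tendsto (by fun_prop) p
    simpa using this.mono_left nhdsWithin_le_nhds
  have hd := hasFDerivWithinAt_closure_of_tendsto_fderiv hF.differentiableOn hUconv hUopen
    (fun y _ => hF.continuous.continuousWithinAt) hlim
  have hu : UniqueDiffWithinAt ℝ U p :=
    uniqueDiffWithinAt_convex hUconv (by rw [hUopen.interior_eq]; exact ⟨_, hxU 0⟩) hp
  have hAeq : A = fderiv ℝ F p :=
    hu.eq (hd.mono subset_closure) (hF p).hasFDerivAt.hasFDerivWithinAt
  rwa [← hAeq]

/-- Theorem 3.5: for the spectral residual iteration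
`x^{k+1} = x^k − κ_k⁻¹ F(x^k)` with `κ_k = ⟨s^{k−1}, y^{k−1}⟩/‖s^{k−1}‖²`, if `x^k → x_*`
with `J(x_*)` invertible and `s^k/‖s^k‖ → s`, then `κ_{k+1} → sᵀ J(x_*) s`, `F(x_*) = 0`,
and the convergence is Q-superlinear. -/
theorem secant_accel_stmt12 {n : ℕ}
    (F : EuclideanSpace ℝ (Fin n) → EuclideanSpace ℝ (Fin n))
    (hF : Differentiable ℝ F)
    (U : Set (EuclideanSpace ℝ (Fin n))) (hUopen : IsOpen U) (hUconv : Convex ℝ U)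
    (L : ℝ) (hL : 0 < L)
    (hLip : ∀ a ∈ U, ∀ b ∈ U, ‖fderiv ℝ F a - fderiv ℝ F b‖ ≤ L * ‖a - b‖)
    (x : ℕ → EuclideanSpace ℝ (Fin n)) (hxU : ∀ k, x k ∈ U)
    (s y : ℕ → EuclideanSpace ℝ (Fin n)) (κ : ℕ → ℝ) (k₀ : ℕ) (hk₀ : 1 ≤ k₀)
    (hs : ∀ k, s k = x (k + 1) - x k)
    (hy : ∀ k, y k = F (x (k + 1)) - F (x k))
    (hsne : ∀ k, k₀ ≤ k → s k ≠ 0)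
    (hsy : ∀ k, k₀ ≤ k → ⟪s (k - 1), y (k - 1)⟫ ≠ 0)
    (hκ : ∀ k, k₀ ≤ k → κ k = ⟪s (k - 1), y (k - 1)⟫ / ‖s (k - 1)‖ ^ 2)
    (hiter : ∀ k, k₀ ≤ k → x (k + 1) = x k - (κ k)⁻¹ • F (x k))
    (xstar : EuclideanSpace ℝ (Fin n))
    (hxlim : Tendsto x atTop (𝓝 xstar))
    (hJinv : Function.Bijective (fderiv ℝ F xstar))
    (sLim : EuclideanSpace ℝ (Fin n))
    (hslim : Tendsto (fun k => (‖s k‖)⁻¹ • s k) atTop (𝓝 sLim)) :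
    Tendsto (fun k => κ (k + 1)) atTop (𝓝 ⟪sLim, fderiv ℝ F xstar sLim⟫) ∧
    F xstar = 0 ∧
    Tendsto (fun k => ‖x (k + 1) - xstar‖ / ‖x k - xstar‖) atTop (𝓝 0) := by
  set J := fderiv ℝ F xstar with hJ
  have hbound := norm_fderiv_sub_le_of_tendsto hF hUopen hUconv hL hLip hxU hxlim
  have hx1 : Tendsto (fun k => x (k + 1)) atTop (𝓝 xstar) := (tendsto_add_atTop_iff_nat 1).2 hxlim
  have hs0 : Tendsto s atTop (𝓝 0) := by
    simpa [← hs] using hx1.sub hxlim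
  -- The mean value inequality on `U ∩ ball xstar (ε / L)` makes the secants asymptotically linear.
  have hyJ : (fun k => y k - J (s k)) =o[atTop] s := by
    rw [Asymptotics.isLittleO_iff]
    intro ε hε
    have hr : 0 < ε / L := by positivity
    filter_upwards [hxlim (Metric.ball_mem_nhds _ hr), hx1 (Metric.ball_mem_nhds _ hr)] with k h0 h1
    have h := (hUconv.inter (convex_ball xstar (ε / L))).norm_image_sub_le_of_norm_hasFDerivWithin_le'
      (f := F) (f' := fderiv ℝ F) (φ := J) (C := ε)
      (fun z _ => (hF z).hasFDerivAt.hasFDerivWithinAt)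
      (fun z hz => ?_) ⟨hxU k, h0⟩ ⟨hxU (k + 1), h1⟩
    · rw [hy, hs]; exact h
    · have hz2 : ‖z - xstar‖ < ε / L := by simpa [dist_eq_norm] using hz.2
      calc _ ≤ L * ‖z - xstar‖ := hbound z hz.1
        _ ≤ L * (ε / L) := by gcongr
        _ = ε := by field_simp
  have hsn : ∀ᶠ k in atTop, ‖s k‖ ≠ 0 := by
    filter_upwards [eventually_ge_atTop k₀] with k hk
    exact norm_ne_zero_iff.2 (hsne k hk)
  have hyu : Tendsto (fun k => ‖s k‖⁻¹ • y k) atTop (𝓝 (J sLim)) := by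
    have h1 : Tendsto (fun k => ‖s k‖⁻¹ • (y k - J (s k))) atTop (𝓝 0) := by
      rw [tendsto_zero_iff_norm_tendsto_zero]
      refine (hyJ.norm_norm.tendsto_div_nhds_zero).congr fun k => ?_
      rw [norm_smul, norm_inv, norm_norm]; ring
    have h2 := h1.add ((J.continuous.tendsto sLim).comp hslim)
    rw [zero_add] at h2
    refine h2.congr fun k => ?_
    simp [smul_sub]
  have hκlim : Tendsto (fun k => κ (k + 1)) atTop (𝓝 ⟪sLim, J sLim⟫) := by
    refine (hslim.inner hyu).congr' ?_
    filter_upwards [eventually_ge_atTop k₀] with k hk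
    rw [hκ (k + 1) (by omega), Nat.add_sub_cancel, real_inner_smul_left, real_inner_smul_right]
    ring
  have hκlim0 : Tendsto κ atTop (𝓝 ⟪sLim, J sLim⟫) := (tendsto_add_atTop_iff_nat 1).1 hκlim
  have hFs : ∀ k, k₀ ≤ k → F (x k) = -(κ k • s k) := by
    intro k hk
    have hne : κ k ≠ 0 := by
      rw [hκ k hk]
      refine div_ne_zero (hsy k hk) ?_
      have : s (k - 1) ≠ 0 := fun h => hsy k hk (by rw [h, inner_zero_left])
      exact pow_ne_zero 2 (norm_ne_zero_iff.2 this)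
    rw [hs, hiter k hk, sub_sub_cancel_left, smul_neg, smul_inv_smul₀ hne, neg_neg]
  have hF0 : F xstar = 0 := by
    refine tendsto_nhds_unique ((hF.continuous.tendsto xstar).comp hxlim) ?_
    have h := (hκlim0.smul hs0).neg
    rw [smul_zero, neg_zero] at h
    refine h.congr' ?_
    filter_upwards [eventually_ge_atTop k₀] with k hk
    exact (hFs k hk).symm
  refine ⟨hκlim, hF0, ?_⟩
  have hsLim : ‖sLim‖ = 1 := by
    refine tendsto_nhds_unique hslim.norm (tendsto_const_nhds.congr' ?_)
    filter_upwards [hsn] with k hk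
    rw [norm_smul, norm_inv, norm_norm, inv_mul_cancel₀ hk]
  set v := J sLim - ⟪sLim, J sLim⟫ • sLim with hv
  have hw : Tendsto (fun k => ‖s k‖⁻¹ • F (x (k + 1))) atTop (𝓝 v) := by
    refine (hyu.sub (hκlim0.smul hslim)).congr' ?_
    filter_upwards [eventually_ge_atTop k₀] with k hk
    have : F (x (k + 1)) = y k - κ k • s k := by
      rw [hy, sub_eq_add_neg, ← hFs k hk, sub_add_cancel]
    rw [this, smul_sub, smul_comm]
  -- `F (x (k + 1))` equals its own projection onto the unit vector along `s (k + 1)`.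
  have hv0 : v = 0 := by
    have hslim1 := (tendsto_add_atTop_iff_nat 1).2 hslim
    have hproj : ⟪v, sLim⟫ • sLim = v := by
      refine tendsto_nhds_unique ((hw.inner hslim1).smul hslim1) (hw.congr' ?_)
      filter_upwards [eventually_ge_atTop k₀] with k hk
      have hk1 : ‖s (k + 1)‖ ≠ 0 := norm_ne_zero_iff.2 (hsne _ (by omega))
      rw [hFs (k + 1) (by omega)]
      simp only [real_inner_smul_left, real_inner_smul_right,
        real_inner_self_eq_norm_sq, smul_smul, ← neg_smul]
      congr 1
      field_simp
    have horth : ⟪v, sLim⟫ = 0 := by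
      rw [hv, inner_sub_left, real_inner_smul_left, real_inner_self_eq_norm_sq, hsLim,
        real_inner_comm]
      ring
    rw [← hproj, horth, zero_smul]
  have hFo : (fun k => F (x (k + 1))) =o[atTop] s := by
    rw [← Asymptotics.isLittleO_norm_norm, Asymptotics.isLittleO_iff_tendsto']
    · rw [hv0] at hw
      refine (tendsto_zero_iff_norm_tendsto_zero.1 hw).congr fun k => ?_
      rw [norm_smul, norm_inv, norm_norm]; ring
    · filter_upwards [hsn] with k hk h
      exact absurd h hk
  obtain ⟨C, -, hC⟩ := J.toLinearMap.exists_antilipschitzWith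
    (LinearMap.ker_eq_bot.2 hJinv.injective)
  have hO : (fun k => x (k + 1) - xstar) =O[atTop] fun k => F (x (k + 1)) := by
    have := ((hF xstar).hasFDerivAt.isTheta_sub
      (hC.isUniformInducing J.uniformContinuous).isInducing).isBigO_symm.comp_tendsto hx1
    simpa [Function.comp_def, hF0] using this
  have heo := hO.trans_isLittleO hFo
  have hee : (fun k => x (k + 1) - xstar) =o[atTop] fun k => x k - xstar := by
    have hsO : s =O[atTop] fun k => x k - xstar := by
      -- The term `‖x (k + 1) - xstar‖ ≤ ‖s k‖ / 2` is absorbed into the left-hand side.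
      refine Asymptotics.IsBigO.of_bound 2 ?_
      filter_upwards [Asymptotics.isLittleO_iff.1 heo (c := 1 / 2) (by norm_num)] with k hk
      have h1 : ‖s k‖ ≤ ‖x (k + 1) - xstar‖ + ‖x k - xstar‖ := by
        rw [hs, ← sub_sub_sub_cancel_right _ _ xstar]
        exact norm_sub_le _ _
      linarith
    exact heo.trans_isBigO hsO
  exact hee.norm_norm.tendsto_div_nhds_zero
end

section
/- Let F : ℝⁿ → ℝⁿ be differentiable with Jacobian J Lipschitz continuous on an open convex set containing all terms of a sequence (x^k). Define s^k = x^{k+1} − x^k and y^k = F(x^{k+1}) − F(x^k), and suppose for all k ≥ k₀: s^k ≠ 0, (s^{k−1})ᵀ y^{k−1} ≠ 0, and x^{k+1} = x^k − (1/κ_k) F(x^k) where κ_k = (s^{k−1})ᵀ y^{k−1} / ‖s^{k−1}‖². Assume x^k → x_* with J(x_*) invertible, and s^k/‖s^k‖ → s for some s ∈ ℝⁿ. Then the Dennis–Moré condition holds: (κ_k s^k − J(x_*) s^k) / ‖s^k‖ → 0 as k → ∞. -/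
/-!
Write `d k = s k / ‖s k‖`, `A = J(x_*)` and `c = ⟪sLim, A sLim⟫`. Since `J` is close to `A` on the
part of `U` near `x_*`, the mean value inequality gives `y k / ‖s k‖ → A sLim`
(`tendsto_secant_quotient`), hence `κ k → c`. The iteration says `F (x k) = -κ k • s k`, so
`y k = κ k • s k - κ (k+1) • s (k+1)`, and dividing by `‖s k‖` shows that a scalar multiple
`t k • d (k+1)` converges to `c • sLim - A sLim`. The inner product of this limit with the unit
vector `sLim` is `c - c = 0`, so `t k → 0` and the limit itself vanishes: `A sLim = c • sLim`.
Therefore `κ k • d k - A (d k) → c • sLim - A sLim = 0`.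

The limit `x_*` may lie on the boundary of `U`. There the Lipschitz continuity of `J` on `U` still
provides a limit of `J` along `U`, and this limit must be the derivative at `x_*` because an open
convex set has the unique differentiability property on its closure (`tendsto_fderiv_closure`).
-/

open Filter Topology
open scoped RealInnerProductSpace

/-- The derivative of a differentiable map, if Lipschitz on an open convex set `U`, is continuous
along `U` at every point of the closure of `U`, with the value of the derivative there. -/
lemma tendsto_fderiv_closure {E : Type*} [NormedAddCommGroup E] [NormedSpace ℝ E]
    [FiniteDimensional ℝ E] {F : E → E} (hF : Differentiable ℝ F) {U : Set E} (hUopen : IsOpen U)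
    (hUconv : Convex ℝ U) {L : ℝ} (hL : 0 < L)
    (hLip : ∀ a ∈ U, ∀ b ∈ U, ‖fderiv ℝ F a - fderiv ℝ F b‖ ≤ L * ‖a - b‖)
    {p : E} (hp : p ∈ closure U) :
    Tendsto (fderiv ℝ F) (𝓝[U] p) (𝓝 (fderiv ℝ F p)) := by
  have hlip : LipschitzOnWith ⟨L, hL.le⟩ (fderiv ℝ F) U :=
    LipschitzOnWith.of_dist_le_mul fun a ha b hb => by
      rw [dist_eq_norm, dist_eq_norm]
      exact hLip a ha b hb
  obtain ⟨g, hg, hgU⟩ := hlip.extend_finite_dimension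
  have hlim : Tendsto (fderiv ℝ F) (𝓝[U] p) (𝓝 (g p)) :=
    (hg.continuous.continuousAt.mono_left nhdsWithin_le_nhds).congr'
      (eventually_nhdsWithin_of_forall fun z hz => (hgU hz).symm)
  have hder : HasFDerivWithinAt F (g p) (closure U) p :=
    hasFDerivWithinAt_closure_of_tendsto_fderiv hF.differentiableOn hUconv hUopen
      (fun z _ => hF.continuous.continuousWithinAt) hlim
  have hne : U.Nonempty := closure_nonempty_iff.mp ⟨p, hp⟩
  have huniq : UniqueDiffWithinAt ℝ U p :=
    uniqueDiffWithinAt_convex hUconv (by rwa [hUopen.interior_eq]) hp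
  have heq : g p = fderiv ℝ F p :=
    huniq.eq (hder.mono subset_closure) (hF p).hasFDerivAt.hasFDerivWithinAt
  rwa [heq] at hlim

/-- If `J` tends to `J(p)` along a convex set `U` that contains a sequence `x k → p`, then the
increments of `F` along the sequence satisfy `y k = J(p) (s k) + o(‖s k‖)`. -/
lemma tendsto_secant_quotient {E : Type*} [NormedAddCommGroup E] [NormedSpace ℝ E]
    {F : E → E} (hF : Differentiable ℝ F) {U : Set E} (hUconv : Convex ℝ U) {p : E}
    (hJ : Tendsto (fderiv ℝ F) (𝓝[U] p) (𝓝 (fderiv ℝ F p)))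
    {x : ℕ → E} (hxU : ∀ k, x k ∈ U) (hx : Tendsto x atTop (𝓝 p)) :
    Tendsto (fun k => ‖x (k + 1) - x k‖⁻¹ •
      (F (x (k + 1)) - F (x k) - fderiv ℝ F p (x (k + 1) - x k))) atTop (𝓝 0) := by
  rw [Metric.tendsto_nhds]
  intro ε hε
  obtain ⟨δ, hδ, hball⟩ := Metric.mem_nhdsWithin_iff.mp
    (hJ (Metric.ball_mem_nhds _ (half_pos hε)))
  have hev : ∀ᶠ k in atTop, x k ∈ Metric.ball p δ := hx (Metric.ball_mem_nhds p hδ)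
  have hev' := (tendsto_add_atTop_nat 1).eventually hev
  filter_upwards [hev, hev'] with k hk hk'
  have hmv := Convex.norm_image_sub_le_of_norm_fderiv_le' (𝕜 := ℝ) (f := F)
    (φ := fderiv ℝ F p) (C := ε / 2)
    (fun z _ => hF z)
    (fun z hz => by
      have hzb := hball hz
      rw [Set.mem_preimage, mem_ball_iff_norm] at hzb
      exact hzb.le)
    ((convex_ball p δ).inter hUconv) ⟨hk, hxU k⟩ ⟨hk', hxU (k + 1)⟩
  rw [dist_zero_right, norm_smul, norm_inv, norm_norm]
  rcases eq_or_ne ‖x (k + 1) - x k‖ 0 with h0 | h0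
  · simpa [h0] using hε
  · rw [inv_mul_lt_iff₀ (by positivity)]
    have hpos : 0 < ‖x (k + 1) - x k‖ := by positivity
    nlinarith

/-- for the spectral residual iteration, under the hypotheses of
Theorem 3.5, the Dennis–Moré condition `(κ_k s^k − J(x_*) s^k)/‖s^k‖ → 0` holds. -/
theorem secant_accel_stmt14 {n : ℕ}
    (F : EuclideanSpace ℝ (Fin n) → EuclideanSpace ℝ (Fin n))
    (hF : Differentiable ℝ F)
    (U : Set (EuclideanSpace ℝ (Fin n))) (hUopen : IsOpen U) (hUconv : Convex ℝ U)
    (L : ℝ) (hL : 0 < L)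
    (hLip : ∀ a ∈ U, ∀ b ∈ U, ‖fderiv ℝ F a - fderiv ℝ F b‖ ≤ L * ‖a - b‖)
    (x : ℕ → EuclideanSpace ℝ (Fin n)) (hxU : ∀ k, x k ∈ U)
    (s y : ℕ → EuclideanSpace ℝ (Fin n)) (κ : ℕ → ℝ) (k₀ : ℕ) (hk₀ : 1 ≤ k₀)
    (hs : ∀ k, s k = x (k + 1) - x k)
    (hy : ∀ k, y k = F (x (k + 1)) - F (x k))
    (hsne : ∀ k, k₀ ≤ k → s k ≠ 0)
    (hsy : ∀ k, k₀ ≤ k → ⟪s (k - 1), y (k - 1)⟫ ≠ 0)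
    (hκ : ∀ k, k₀ ≤ k → κ k = ⟪s (k - 1), y (k - 1)⟫ / ‖s (k - 1)‖ ^ 2)
    (hiter : ∀ k, k₀ ≤ k → x (k + 1) = x k - (κ k)⁻¹ • F (x k))
    (xstar : EuclideanSpace ℝ (Fin n))
    (hxlim : Tendsto x atTop (𝓝 xstar))
    (hJinv : Function.Bijective (fderiv ℝ F xstar))
    (sLim : EuclideanSpace ℝ (Fin n))
    (hslim : Tendsto (fun k => (‖s k‖)⁻¹ • s k) atTop (𝓝 sLim)) :
    Tendsto (fun k => (‖s k‖)⁻¹ • (κ k • s k - fderiv ℝ F xstar (s k))) atTop (𝓝 0) := by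
  set A := fderiv ℝ F xstar with hA
  have hclos : xstar ∈ closure U :=
    mem_closure_of_tendsto hxlim (Eventually.of_forall hxU)
  have hrem := tendsto_secant_quotient hF hUconv
    (tendsto_fderiv_closure hF hUopen hUconv hL hLip hclos) hxU hxlim
  have hAd : Tendsto (fun k => A (‖s k‖⁻¹ • s k)) atTop (𝓝 (A sLim)) :=
    (A.continuous.tendsto sLim).comp hslim
  have hyd : Tendsto (fun k => ‖s k‖⁻¹ • y k) atTop (𝓝 (A sLim)) := by
    have h := hrem.add hAd
    rw [zero_add] at h
    refine h.congr fun k => ?_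
    rw [← hs k, ← hy k, map_smul, ← smul_add, sub_add_cancel]
  -- `‖d k‖ = 1` eventually, hence `sLim` is a unit vector.
  have hunit : ⟪sLim, sLim⟫ = 1 := by
    have h : Tendsto (fun k => ⟪‖s k‖⁻¹ • s k, ‖s k‖⁻¹ • s k⟫) atTop (𝓝 ⟪sLim, sLim⟫) :=
      hslim.inner hslim
    refine tendsto_nhds_unique h (tendsto_const_nhds.congr' ?_)
    filter_upwards [eventually_ge_atTop k₀] with k hk
    have hne : ‖s k‖ ≠ 0 := norm_ne_zero_iff.mpr (hsne k hk)
    rw [real_inner_smul_left, real_inner_smul_right, real_inner_self_eq_norm_sq]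
    field_simp
  have hκlim1 : Tendsto (fun k => κ (k + 1)) atTop (𝓝 ⟪sLim, A sLim⟫) := by
    refine (hslim.inner hyd).congr' ?_
    filter_upwards [eventually_ge_atTop k₀] with k hk
    rw [hκ (k + 1) (by omega), Nat.add_sub_cancel, real_inner_smul_left, real_inner_smul_right]
    ring
  have hκlim : Tendsto κ atTop (𝓝 ⟪sLim, A sLim⟫) := (tendsto_add_atTop_iff_nat 1).mp hκlim1
  set c : ℝ := ⟪sLim, A sLim⟫ with hc
  have hFx : ∀ k, k₀ ≤ k → F (x k) = -(κ k • s k) := by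
    intro k hk
    have hin := hsy k hk
    have hsk : s (k - 1) ≠ 0 := fun h => hin (by rw [h, inner_zero_left])
    have hκne : κ k ≠ 0 := by
      rw [hκ k hk]
      exact div_ne_zero hin (pow_ne_zero 2 (norm_ne_zero_iff.mpr hsk))
    have hsF : s k = -((κ k)⁻¹ • F (x k)) := by
      rw [hs k, hiter k hk]
      abel
    rw [hsF, smul_neg, neg_neg, smul_inv_smul₀ hκne]
  have hκd : Tendsto (fun k => κ k • (‖s k‖⁻¹ • s k)) atTop (𝓝 (c • sLim)) :=
    hκlim.smul hslim
  have hd1 : Tendsto (fun k => ‖s (k + 1)‖⁻¹ • s (k + 1)) atTop (𝓝 sLim) :=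
    hslim.comp (tendsto_add_atTop_nat 1)
  -- `t k = κ (k+1) ‖s (k+1)‖ / ‖s k‖` is the coefficient of `d (k+1)` in `y k / ‖s k‖`.
  let t : ℕ → ℝ := fun k => κ (k + 1) * ‖s (k + 1)‖ * ‖s k‖⁻¹
  have htd : Tendsto (fun k => t k • (‖s (k + 1)‖⁻¹ • s (k + 1))) atTop
      (𝓝 (c • sLim - A sLim)) := by
    refine (hκd.sub hyd).congr' ?_
    filter_upwards [eventually_ge_atTop k₀] with k hk
    have hne : ‖s (k + 1)‖ ≠ 0 := norm_ne_zero_iff.mpr (hsne (k + 1) (by omega))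
    have hcoef : t k * ‖s (k + 1)‖⁻¹ = ‖s k‖⁻¹ * κ (k + 1) := by
      simp only [t]
      field_simp
    rw [hy k, hFx k hk, hFx (k + 1) (by omega), smul_smul (t k), hcoef]
    module
  have ht : Tendsto t atTop (𝓝 0) := by
    have h : Tendsto (fun k => ⟪‖s (k + 1)‖⁻¹ • s (k + 1), t k • (‖s (k + 1)‖⁻¹ • s (k + 1))⟫)
        atTop (𝓝 ⟪sLim, c • sLim - A sLim⟫) := hd1.inner htd
    have hzero : ⟪sLim, c • sLim - A sLim⟫ = 0 := by
      rw [inner_sub_right, real_inner_smul_right, hunit, mul_one, ← hc, sub_self]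
    rw [hzero] at h
    refine h.congr' ?_
    filter_upwards [eventually_ge_atTop k₀] with k hk
    have hne : ‖s (k + 1)‖ ≠ 0 := norm_ne_zero_iff.mpr (hsne (k + 1) (by omega))
    rw [real_inner_smul_right, real_inner_smul_left, real_inner_smul_right,
      real_inner_self_eq_norm_sq]
    field_simp
  have heig : c • sLim - A sLim = 0 := by
    have h := ht.smul hd1
    rw [zero_smul] at h
    exact tendsto_nhds_unique htd h
  have hfinal := hκd.sub hAd
  rw [heig] at hfinal
  refine hfinal.congr fun k => ?_
  rw [map_smul, smul_sub, smul_comm]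
end

section
/- Let F : ℝⁿ → ℝⁿ be differentiable with Jacobian J Lipschitz continuous on an open convex set containing all terms of a sequence (x^k). Define s^k = x^{k+1} − x^k and y^k = F(x^{k+1}) − F(x^k), and suppose for all k ≥ k₀: s^k ≠ 0, (s^{k−1})ᵀ y^{k−1} ≠ 0, and x^{k+1} = x^k − (1/κ_k) F(x^k) where κ_k = (s^{k−1})ᵀ y^{k−1} / ‖s^{k−1}‖². Assume x^k → x_*, and s^k/‖s^k‖ → s for some s ∈ ℝⁿ (so ‖s‖ = 1). Then J(x_*) s = (sᵀ J(x_*) s) s; that is, s is an eigenvector of J(x_*) with eigenvalue κ_* = sᵀ J(x_*) s. -/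
/-!
Write `A = J(x_*)` and `u_k = s^k / ‖s^k‖`. Since `J` is Lipschitz on the open convex set `U` and
`x_* ∈ closure U`, the mean value inequality gives `y^k = A s^k + o(‖s^k‖)`, hence
`y^k / ‖s^k‖ → A s` and `κ_{k+1} = ⟪u_k, y^k / ‖s^k‖⟫ → κ_* = ⟪s, A s⟫`. The iteration reads
`F(x^k) = -κ_k s^k`, so `y^k = κ_k s^k - κ_{k+1} s^{k+1}`; dividing by `‖s^k‖`,
`r_k u_{k+1} = κ_k u_k - y^k / ‖s^k‖ → κ_* s - A s` with `r_k = κ_{k+1} ‖s^{k+1}‖ / ‖s^k‖`.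
Taking the inner product with `u_{k+1} → s` yields `r_k → κ_* - κ_* = 0`, so the limit
`κ_* s - A s` vanishes.

The point `x_*` may lie on the boundary of `U`, where the Lipschitz bound is not assumed; that `J`
is nevertheless continuous at `x_*` within `U` is `tendsto_fderiv_of_mem_closure`.
-/

open Filter Topology
open scoped RealInnerProductSpace

/-- If the derivative of a differentiable map is Lipschitz on an open convex set, then at each point
`p` of the closure it tends, within the set, to the derivative at `p`. By completeness it has some
limit, this limit is a derivative of `F` within `closure U`, and such a derivative is unique because
`U` is convex with nonempty interior. -/
theorem tendsto_fderiv_of_mem_closure {E : Type*} [NormedAddCommGroup E] [NormedSpace ℝ E]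
    [CompleteSpace E] {F : E → E} (hF : Differentiable ℝ F) {U : Set E} (hUopen : IsOpen U)
    (hUconv : Convex ℝ U) {L : ℝ} (hL : 0 < L)
    (hLip : ∀ a ∈ U, ∀ b ∈ U, ‖fderiv ℝ F a - fderiv ℝ F b‖ ≤ L * ‖a - b‖)
    {p : E} (hp : p ∈ closure U) :
    Tendsto (fderiv ℝ F) (𝓝[U] p) (𝓝 (fderiv ℝ F p)) := by
  have hlip : LipschitzOnWith ⟨L, hL.le⟩ (fderiv ℝ F) U :=
    LipschitzOnWith.of_dist_le_mul fun a ha b hb => by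
      rw [dist_eq_norm, dist_eq_norm]; exact hLip a ha b hb
  have : (𝓝[U] p).NeBot := mem_closure_iff_nhdsWithin_neBot.1 hp
  have hcau : Cauchy (𝓝[U] p) := cauchy_nhds.mono inf_le_left
  obtain ⟨B, hB⟩ := CompleteSpace.complete
    (hcau.map_of_le hlip.uniformContinuousOn inf_le_right)
  have hB' : Tendsto (fderiv ℝ F) (𝓝[U] p) (𝓝 B) := hB
  have h1 : HasFDerivWithinAt F B (closure U) p :=
    hasFDerivWithinAt_closure_of_tendsto_fderiv hF.differentiableOn hUconv hUopen
      (fun z _ => hF.continuous.continuousWithinAt) hB'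
  have hne : (interior U).Nonempty := by
    rw [hUopen.interior_eq]; exact closure_nonempty_iff.1 ⟨p, hp⟩
  have huniq : UniqueDiffWithinAt ℝ (closure U) p :=
    (uniqueDiffWithinAt_convex hUconv hne hp).mono subset_closure
  rwa [huniq.eq (hF p).hasFDerivAt.hasFDerivWithinAt h1]

/-- The secant expansion `F(b_k) - F(a_k) = J(p)(b_k - a_k) + o(‖b_k - a_k‖)` for sequences in a
convex set `U` converging to `p`, when `J` tends to `J(p)` within `U`. -/
theorem isLittleO_secant {E : Type*} [NormedAddCommGroup E] [NormedSpace ℝ E]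
    {F : E → E} (hF : Differentiable ℝ F) {U : Set E} (hUconv : Convex ℝ U) {p : E}
    (hJ : Tendsto (fderiv ℝ F) (𝓝[U] p) (𝓝 (fderiv ℝ F p)))
    {a b : ℕ → E} (haU : ∀ k, a k ∈ U) (hbU : ∀ k, b k ∈ U)
    (ha : Tendsto a atTop (𝓝 p)) (hb : Tendsto b atTop (𝓝 p)) :
    (fun k => F (b k) - F (a k) - fderiv ℝ F p (b k - a k)) =o[atTop] fun k => b k - a k := by
  refine Asymptotics.isLittleO_iff.2 fun ε hε => ?_
  obtain ⟨δ, hδ, hball⟩ := Metric.mem_nhdsWithin_iff.1 (hJ (Metric.closedBall_mem_nhds _ hε))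
  filter_upwards [ha (Metric.ball_mem_nhds p hδ), hb (Metric.ball_mem_nhds p hδ)] with k hka hkb
  refine ((convex_ball p δ).inter hUconv).norm_image_sub_le_of_norm_hasFDerivWithin_le'
    (f' := fderiv ℝ F) (fun z _ => (hF z).hasFDerivAt.hasFDerivWithinAt) (fun z hz => ?_)
    ⟨hka, haU k⟩ ⟨hkb, hbU k⟩
  exact mem_closedBall_iff_norm.1 (hball hz)

/-- for the spectral residual iteration, under the hypotheses of
Theorem 3.5 (without invertibility of `J(x_*)`), the limit direction `s` is an
eigenvector of `J(x_*)` with eigenvalue `sᵀ J(x_*) s`. -/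
theorem secant_accel_stmt15 {n : ℕ}
    (F : EuclideanSpace ℝ (Fin n) → EuclideanSpace ℝ (Fin n))
    (hF : Differentiable ℝ F)
    (U : Set (EuclideanSpace ℝ (Fin n))) (hUopen : IsOpen U) (hUconv : Convex ℝ U)
    (L : ℝ) (hL : 0 < L)
    (hLip : ∀ a ∈ U, ∀ b ∈ U, ‖fderiv ℝ F a - fderiv ℝ F b‖ ≤ L * ‖a - b‖)
    (x : ℕ → EuclideanSpace ℝ (Fin n)) (hxU : ∀ k, x k ∈ U)
    (s y : ℕ → EuclideanSpace ℝ (Fin n)) (κ : ℕ → ℝ) (k₀ : ℕ) (hk₀ : 1 ≤ k₀)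
    (hs : ∀ k, s k = x (k + 1) - x k)
    (hy : ∀ k, y k = F (x (k + 1)) - F (x k))
    (hsne : ∀ k, k₀ ≤ k → s k ≠ 0)
    (hsy : ∀ k, k₀ ≤ k → ⟪s (k - 1), y (k - 1)⟫ ≠ 0)
    (hκ : ∀ k, k₀ ≤ k → κ k = ⟪s (k - 1), y (k - 1)⟫ / ‖s (k - 1)‖ ^ 2)
    (hiter : ∀ k, k₀ ≤ k → x (k + 1) = x k - (κ k)⁻¹ • F (x k))
    (xstar : EuclideanSpace ℝ (Fin n))
    (hxlim : Tendsto x atTop (𝓝 xstar))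
    (sLim : EuclideanSpace ℝ (Fin n))
    (hslim : Tendsto (fun k => (‖s k‖)⁻¹ • s k) atTop (𝓝 sLim)) :
    fderiv ℝ F xstar sLim = ⟪sLim, fderiv ℝ F xstar sLim⟫ • sLim := by
  have hclos : xstar ∈ closure U := mem_closure_of_tendsto hxlim (Eventually.of_forall hxU)
  have hJ := tendsto_fderiv_of_mem_closure hF hUopen hUconv hL hLip hclos
  have hsec : (fun k => y k - fderiv ℝ F xstar (s k)) =o[atTop] s := by
    have h := isLittleO_secant hF hUconv hJ hxU (fun k => hxU (k + 1)) hxlim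
      (hxlim.comp (tendsto_add_atTop_nat 1))
    simpa only [← hs, ← hy] using h
  set A := fderiv ℝ F xstar with hA
  have hlarge : ∀ᶠ k in atTop, k₀ ≤ k := eventually_ge_atTop k₀
  have hv : Tendsto (fun k => ‖s k‖⁻¹ • y k) atTop (𝓝 (A sLim)) := by
    have h0 : Tendsto (fun k => ‖s k‖⁻¹ • (y k - A (s k))) atTop (𝓝 0) := by
      rw [tendsto_zero_iff_norm_tendsto_zero]
      refine hsec.norm_norm.tendsto_div_nhds_zero.congr fun k => ?_
      rw [norm_smul, norm_inv, norm_norm, div_eq_inv_mul]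
    have h1 := h0.add ((A.continuous.tendsto sLim).comp hslim)
    rw [zero_add] at h1
    refine h1.congr fun k => ?_
    simp [smul_sub]
  have hunit : ∀ k, k₀ ≤ k → ‖‖s k‖⁻¹ • s k‖ = 1 := fun k hk =>
    norm_smul_inv_norm (𝕜 := ℝ) (hsne k hk)
  have hnorm : ‖sLim‖ = 1 :=
    tendsto_nhds_unique hslim.norm
      (tendsto_const_nhds.congr' (hlarge.mono fun k hk => (hunit k hk).symm))
  have hκlim : Tendsto κ atTop (𝓝 ⟪sLim, A sLim⟫) := by
    rw [← tendsto_add_atTop_iff_nat 1]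
    refine (hslim.inner hv).congr' ?_
    filter_upwards [hlarge] with k hk
    rw [hκ (k + 1) (by omega), Nat.add_sub_cancel, real_inner_smul_left, real_inner_smul_right]
    ring
  have hFx : ∀ k, k₀ ≤ k → F (x k) = -(κ k • s k) := by
    intro k hk
    have hne : κ k ≠ 0 := by
      rw [hκ k hk]
      refine div_ne_zero (hsy k hk) (pow_ne_zero 2 (norm_ne_zero_iff.2 fun h => hsy k hk ?_))
      rw [h, inner_zero_left]
    rw [hs k, hiter k hk, sub_sub_cancel_left, smul_neg, smul_inv_smul₀ hne, neg_neg]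
  set r : ℕ → ℝ := fun k => κ (k + 1) * ‖s (k + 1)‖ * ‖s k‖⁻¹ with hr
  have hw : Tendsto (fun k => r k • (‖s (k + 1)‖⁻¹ • s (k + 1))) atTop
      (𝓝 (⟪sLim, A sLim⟫ • sLim - A sLim)) := by
    refine ((hκlim.smul hslim).sub hv).congr' ?_
    filter_upwards [hlarge] with k hk
    have hne : ‖s (k + 1)‖ ≠ 0 := norm_ne_zero_iff.2 (hsne (k + 1) (by omega))
    have hcoef : r k * ‖s (k + 1)‖⁻¹ = ‖s k‖⁻¹ * κ (k + 1) := by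
      simp only [hr]; field_simp
    rw [hy k, hFx k hk, hFx (k + 1) (by omega), smul_smul (r k), hcoef]
    module
  have hu : Tendsto (fun k => ‖s (k + 1)‖⁻¹ • s (k + 1)) atTop (𝓝 sLim) :=
    hslim.comp (tendsto_add_atTop_nat 1)
  have hr0 : Tendsto r atTop (𝓝 0) := by
    have h := hw.inner (𝕜 := ℝ) hu
    have hlim : ⟪⟪sLim, A sLim⟫ • sLim - A sLim, sLim⟫ = 0 := by
      rw [inner_sub_left, real_inner_smul_left, real_inner_self_eq_norm_sq, hnorm,
        real_inner_comm (A sLim) sLim]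
      ring
    rw [hlim] at h
    refine h.congr' ?_
    filter_upwards [hlarge] with k hk
    rw [real_inner_smul_left, real_inner_self_eq_norm_sq, hunit (k + 1) (by omega)]
    ring
  have hzero : ⟪sLim, A sLim⟫ • sLim - A sLim = 0 := by
    refine tendsto_nhds_unique hw ?_
    simpa using hr0.smul hu
  exact (sub_eq_zero.1 hzero).symm
end

section
/- Let F : ℝⁿ → ℝⁿ, let (x^k) be a sequence in ℝⁿ, set s^k = x^{k+1} − x^k and y^k = F(x^{k+1}) − F(x^k), and let (H_k) be a sequence of n×n real matrices (in the paper, H_k = S_k Y_k†, the product of the increment matrix S_k with the Moore–Penrose pseudoinverse of Y_k, so that H_{k+1} y^k = s^k when Y_{k+1} has linearly independent columns). Assume: (H1) there is k₁ such that x^{k+1} = x^k − H_k F(x^k) for all k ≥ k₁; (H2) H_{k+1} y^k = s^k for all k, and there is a sequence β_k > 0 with β_k → 0 such that ‖(H_{k+1} − H_k) y^k‖ ≤ β_k ‖y^k‖ for all k large enough; (H3) there exists c > 0 with ‖H_k F(x^{k+1})‖ ≥ c ‖F(x^{k+1})‖ for all k large enough. Then for all k large enough (so that β_k < c), ‖F(x^{k+1})‖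 ≤ (β_k/(c − β_k)) ‖F(x^k)‖; in particular ‖F(x^k)‖ converges Q-superlinearly to 0. -/
open Filter Topology

/-!
By the secant equation and the iteration,
`(H_{k+1} - H_k) y^k = s^k - H_k F(x^{k+1}) + H_k F(x^k) = -H_k F(x^{k+1})`. Hence (H3) and (H2)
give `c ‖F(x^{k+1})‖ ≤ β_k ‖y^k‖ ≤ β_k (‖F(x^{k+1})‖ + ‖F(x^k)‖)`, which rearranges to the claimed
bound once `β_k < c`; the factor `β_k / (c - β_k)` tends to `0`.
-/

/-- Theorem 4.1: for the accelerated iteration `x^{k+1} = x^k − H_k F(x^k)`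
(H1) with the secant property `H_{k+1} y^k = s^k`, consistency bound
`‖(H_{k+1} − H_k) y^k‖ ≤ β_k ‖y^k‖` with `β_k → 0` (H2), and lower bound
`‖H_k F(x^{k+1})‖ ≥ c ‖F(x^{k+1})‖` (H3), one eventually has
`‖F(x^{k+1})‖ ≤ (β_k/(c − β_k)) ‖F(x^k)‖`; in particular `‖F(x^k)‖ → 0`
Q-superlinearly. -/
theorem secant_accel_stmt16 {n : ℕ}
    (F : EuclideanSpace ℝ (Fin n) → EuclideanSpace ℝ (Fin n))
    (x : ℕ → EuclideanSpace ℝ (Fin n))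
    (s y : ℕ → EuclideanSpace ℝ (Fin n))
    (hs : ∀ k, s k = x (k + 1) - x k)
    (hy : ∀ k, y k = F (x (k + 1)) - F (x k))
    (H : ℕ → (EuclideanSpace ℝ (Fin n) →L[ℝ] EuclideanSpace ℝ (Fin n)))
    (hH1 : ∃ k₁ : ℕ, ∀ k, k₁ ≤ k → x (k + 1) = x k - H k (F (x k)))
    (hsecant : ∀ k, H (k + 1) (y k) = s k)
    (β : ℕ → ℝ) (hβpos : ∀ k, 0 < β k) (hβ0 : Tendsto β atTop (𝓝 0))
    (hH2 : ∃ k₂ : ℕ, ∀ k, k₂ ≤ k → ‖(H (k + 1) - H k) (y k)‖ ≤ β k * ‖y k‖)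
    (c : ℝ) (hc : 0 < c)
    (hH3 : ∃ k₃ : ℕ, ∀ k, k₃ ≤ k → c * ‖F (x (k + 1))‖ ≤ ‖H k (F (x (k + 1)))‖) :
    (∃ K : ℕ, ∀ k, K ≤ k →
      β k < c ∧ ‖F (x (k + 1))‖ ≤ (β k / (c - β k)) * ‖F (x k)‖) ∧
    ∃ r : ℕ → ℝ, Tendsto r atTop (𝓝 0) ∧
      ∃ K : ℕ, ∀ k, K ≤ k → ‖F (x (k + 1))‖ ≤ r k * ‖F (x k)‖ := by
  have key : ∃ K : ℕ, ∀ k, K ≤ k →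
      β k < c ∧ ‖F (x (k + 1))‖ ≤ (β k / (c - β k)) * ‖F (x k)‖ := by
    obtain ⟨k₁, h₁⟩ := hH1
    obtain ⟨k₂, h₂⟩ := hH2
    obtain ⟨k₃, h₃⟩ := hH3
    obtain ⟨k₄, h₄⟩ := eventually_atTop.1 (hβ0.eventually_lt_const hc)
    refine ⟨max (max k₁ k₂) (max k₃ k₄), fun k hk => ?_⟩
    simp only [max_le_iff] at hk
    obtain ⟨⟨hk₁, hk₂⟩, hk₃, hk₄⟩ := hk
    have hlt : β k < c := h₄ k hk₄
    refine ⟨hlt, ?_⟩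
    -- The secant equation and the iteration cancel everything except `H k (F (x (k + 1)))`.
    have hid : (H (k + 1) - H k) (y k) = -(H k (F (x (k + 1)))) := by
      rw [ContinuousLinearMap.sub_apply, hsecant, hs, hy, map_sub, h₁ k hk₁]
      abel
    have hb := h₂ k hk₂
    rw [hid, norm_neg] at hb
    have hy_le : ‖y k‖ ≤ ‖F (x (k + 1))‖ + ‖F (x k)‖ := by
      rw [hy]
      exact norm_sub_le _ _
    have hmul := mul_le_mul_of_nonneg_left hy_le (hβpos k).le
    have hc3 := h₃ k hk₃
    rw [div_mul_eq_mul_div, le_div_iff₀ (sub_pos.2 hlt)]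
    linarith
  refine ⟨key, fun k => β k / (c - β k), ?_, key.imp fun K hK k hk => (hK k hk).2⟩
  have hlim := hβ0.div (tendsto_const_nhds.sub hβ0) (by simpa using hc.ne' : c - 0 ≠ 0)
  rwa [zero_div] at hlim
end
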